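/- For every ε > 0 there exists N such that for all n ≥ N, every simple graph G on n vertices that contains no cycle of length 5 as a subgraph has at most (1/(2√2) + ε)·n^{3/2} triangles. -/

import Mathlib

/-- A graph is `C5`-free if it contains no cycle of length 5 as a subgraph. -/
def C5Free {V : Type*} (G : SimpleGraph V) : Prop :=
  ∀ (v : V) (w : G.Walk v v), w.IsCycle → w.length ≠ 5

/-!
Pick one edge in every triangle: an edge lying in no other triangle if there is one, and otherwise,
as `C₅`-freeness forces the triangle into a `K₄`, an edge such that the four edges picked inside
this `K₄` are distinct and form a triangle with a pendant edge (a *paw*). By `C₅`-freeness the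
picked edges are pairwise distinct and form a graph `H` without four-cycles, so `H` has at least as
many edges as the given graph has triangles.

Now let `H` be `C₄`- and `C₅`-free with `n` vertices and `m` edges. As `H` has no `C₄`,
`∑_{z ∼ x} d(z)` is up to `d(x)` the number of second neighbours of `x`; as `H` has no `C₅`, the
second neighbourhoods of adjacent `x`, `y` overlap only near `x`, `y` and their common neighbour.
Hence `∑_{z ∼ x} d(z) + ∑_{z ∼ y} d(z) ≤ n` up to lower order terms, and summing over the `2 m`
ordered pairs of adjacent vertices gives `2 ∑_{x ∼ y} d(x) d(y) ≤ 2 m n + O(n²)`. On the other hand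
`∑_{x ∼ y} d(x) d(y) ≥ (2 m)³ / n²`, so `8 m² ≤ n³ + O(n^{5/2})`.
-/

open Finset

/-- A graph contains no cycle of length 4, encoded as: two distinct vertices have at most one
common neighbour. -/
def C4Free {V : Type*} (G : SimpleGraph V) : Prop :=
  Pairwise fun a c => (G.commonNeighbors a c).Subsingleton

namespace C5Free

variable {V : Type*} {G : SimpleGraph V}

lemma mono {H : SimpleGraph V} (hHG : H ≤ G) (hG : C5Free G) : C5Free H := fun v w hw => by
  simpa using hG v (w.mapLe hHG) (hw.mapLe hHG)

lemma not_pentagon (hG : C5Free G) {a b c d e : V} (hab : G.Adj a b) (hbc : G.Adj b c)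
    (hcd : G.Adj c d) (hde : G.Adj d e) (hea : G.Adj e a)
    (hac : a ≠ c) (had : a ≠ d) (hbd : b ≠ d) (hbe : b ≠ e) (hce : c ≠ e) : False := by
  let w : G.Walk a a := .cons hab (.cons hbc (.cons hcd (.cons hde (.cons hea .nil))))
  refine hG a w ?_ rfl
  simp only [w, SimpleGraph.Walk.cons_isCycle_iff, SimpleGraph.Walk.cons_isPath_iff,
    SimpleGraph.Walk.IsPath.nil, SimpleGraph.Walk.support_cons, SimpleGraph.Walk.support_nil,
    SimpleGraph.Walk.edges_cons, SimpleGraph.Walk.edges_nil, List.mem_cons, List.not_mem_nil,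
    Sym2.eq_iff]
  grind [hab.ne, hbc.ne, hcd.ne, hde.ne, hea.ne]

end C5Free

section EdgeSelection

variable {V : Type*} {G : SimpleGraph V}

lemma C5Free.eq_of_mem_commonNeighbors (hG : C5Free G) {a b c d e : V} (hab : G.Adj a b)
    (hac : G.Adj a c) (hbc : G.Adj b c) (hd : d ∈ G.commonNeighbors a b) (hdc : d ≠ c)
    (he : e ∈ G.commonNeighbors a c) (heb : e ≠ b) : e = d := by
  by_contra hed
  exact hG.not_pentagon he.1 he.2.symm hbc.symm hd.2 hd.1.symm hac.ne hab.ne heb hed hdc.symm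

lemma C5Free.commonNeighbors_subset_of_isNClique_four (hG : C5Free G) {S : Finset V}
    (hS : G.IsNClique 4 S) {a b : V} (ha : a ∈ S) (hb : b ∈ S) (hab : a ≠ b) :
    G.commonNeighbors a b ⊆ S := by
  classical
  have hb' : b ∈ S.erase a := mem_erase.2 ⟨hab.symm, hb⟩
  obtain ⟨c, d, hcd, hcd_eq⟩ : ∃ c d, c ≠ d ∧ (S.erase a).erase b = {c, d} :=
    card_eq_two.1 (by rw [card_erase_of_mem hb', card_erase_of_mem ha, hS.card_eq])
  have hc : c ∈ (S.erase a).erase b := by simp [hcd_eq]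
  have hd : d ∈ (S.erase a).erase b := by simp [hcd_eq]
  simp only [mem_erase] at hc hd
  have adj {x y : V} (hx : x ∈ S) (hy : y ∈ S) (hxy : x ≠ y) : G.Adj x y := hS.isClique hx hy hxy
  intro w hw
  by_contra hwS
  refine hwS (hG.eq_of_mem_commonNeighbors (adj ha hb hab) (adj ha hc.2.2 hc.2.1.symm)
    (adj hb hc.2.2 hc.1.symm) hw (fun h => hwS (h ▸ hc.2.2)) ⟨adj ha hd.2.2 hd.2.1.symm,
      adj hc.2.2 hd.2.2 hcd⟩ hd.1 ▸ hd.2.2)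

/-- A choice of one edge inside each of the four triangles of a `K₄` on `S` such that the chosen
edges form a paw. The edge chosen in `S \ {z}` is `S \ {z, φ z}`: two triangles share their edge
exactly when `φ` swaps the omitted vertices, and distinct chosen edges form a four-cycle exactly
when `φ` is onto `S`. -/
structure IsPawMap (S : Finset V) (φ : V → V) : Prop where
  mapsTo : ∀ z ∈ S, φ z ∈ S
  apply_apply_ne : ∀ z ∈ S, φ (φ z) ≠ z
  exists_forall_ne : ∃ w ∈ S, ∀ z ∈ S, φ z ≠ w

lemma IsPawMap.apply_ne {S : Finset V} {φ : V → V} (hφ : IsPawMap S φ) {z : V} (hz : z ∈ S) :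
    φ z ≠ z := fun h => hφ.apply_apply_ne z hz (by rw [h, h])

lemma exists_isPawMap {S : Finset V} (hS : #S = 4) : ∃ φ : V → V, IsPawMap S φ := by
  let ψ : Fin 4 → Fin 4 := ![1, 2, 0, 0]
  have hψ : ∀ i, ψ (ψ i) ≠ i := by decide
  have hψ3 : ∀ i, ψ i ≠ 3 := by decide
  let e : Fin 4 → V := fun i => S.equivFinOfCardEq hS |>.symm i
  have he : Function.Injective e :=
    Subtype.val_injective.comp (S.equivFinOfCardEq hS).symm.injective
  have he_mem (i : Fin 4) : e i ∈ S := ((S.equivFinOfCardEq hS).symm i).2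
  have he_surj {z : V} (hz : z ∈ S) : ∃ i, e i = z :=
    ⟨S.equivFinOfCardEq hS ⟨z, hz⟩, by simp [e]⟩
  have hφ (i : Fin 4) : Function.extend e (e ∘ ψ) id (e i) = e (ψ i) := he.extend_apply _ _ _
  refine ⟨Function.extend e (e ∘ ψ) id, fun z hz => ?_, fun z hz => ?_,
    e 3, he_mem 3, fun z hz => ?_⟩
  · obtain ⟨i, rfl⟩ := he_surj hz
    exact hφ i ▸ he_mem _
  · obtain ⟨i, rfl⟩ := he_surj hz
    rw [hφ, hφ, he.ne_iff]
    exact hψ i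
  · obtain ⟨i, rfl⟩ := he_surj hz
    rw [hφ, he.ne_iff]
    exact hψ3 i

lemma IsPawMap.congr {S : Finset V} {φ ψ : V → V} (hφ : IsPawMap S φ)
    (h : ∀ z ∈ S, ψ z = φ z) : IsPawMap S ψ where
  mapsTo z hz := h z hz ▸ hφ.mapsTo z hz
  apply_apply_ne z hz := by
    rw [h z hz, h _ (hφ.mapsTo z hz)]
    exact hφ.apply_apply_ne z hz
  exists_forall_ne := hφ.exists_forall_ne.imp fun _ => .imp_right fun hw z hz =>
    (h z hz).trans_ne (hw z hz)

variable [DecidableEq V]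

/-- The edge of the triangle `T` opposite to its vertex `v` is private to `T`: it lies in no other
triangle. -/
def IsPrivateApex (G : SimpleGraph V) (T : Finset V) (v : V) : Prop :=
  ∀ w, (∀ u ∈ T.erase v, G.Adj u w) → w = v

lemma C5Free.exists_isPrivateApex_or_isNClique_four (hG : C5Free G) {T : Finset V}
    (hT : G.IsNClique 3 T) :
    (∃ v ∈ T, IsPrivateApex G T v) ∨ ∃ z ∉ T, G.IsNClique 4 (insert z T) := by
  obtain ⟨a, b, c, hab, hac, hbc, rfl⟩ := SimpleGraph.is3Clique_iff.1 hT
  unfold IsPrivateApex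
  by_contra! ⟨hpriv, hfour⟩
  obtain ⟨d, hd, hdc⟩ := hpriv c (by simp)
  obtain ⟨e, he, heb⟩ := hpriv b (by simp)
  have had : G.Adj a d := hd a (by grind [hac.ne])
  have hbd : G.Adj b d := hd b (by grind [hbc.ne])
  have hed : e = d := hG.eq_of_mem_commonNeighbors hab hac hbc ⟨had, hbd⟩ hdc
    ⟨he a (by grind [hab.ne]), he c (by grind [hbc.ne])⟩ heb
  have hcd : G.Adj c d := hed ▸ he c (by grind [hbc.ne])
  refine hfour d ?_ (hT.insert ?_)
  · simp [had.ne', hbd.ne', hcd.ne']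
  · simp [had.symm, hbd.symm, hcd.symm]

/-- A rule choosing one edge in each triangle `T`, encoded by the vertex `apex T` of `T` opposite to
it: the edge is private to `T` or else `T` lies in a `K₄`, and the edges chosen in the triangles of
each `K₄` form a paw. -/
structure IsApexRule (G : SimpleGraph V) (apex : Finset V → V) : Prop where
  apex_mem : ∀ T, G.IsNClique 3 T → apex T ∈ T
  isPrivateApex_or_isNClique_four : ∀ T, G.IsNClique 3 T →
    IsPrivateApex G T (apex T) ∨ ∃ z ∉ T, G.IsNClique 4 (insert z T)
  isPawMap : ∀ S, G.IsNClique 4 S → IsPawMap S fun z => apex (S.erase z)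

lemma C5Free.exists_isApexRule [Nonempty V] (hG : C5Free G) : ∃ apex, IsApexRule G apex := by
  choose! φ hφ using fun (S : Finset V) (hS : #S = 4) => exists_isPawMap hS
  have hchoice (T : Finset V) (hT : G.IsNClique 3 T) :
      ∃ v ∈ T, IsPrivateApex G T v ∨
        ∃ z ∉ T, G.IsNClique 4 (insert z T) ∧ v = φ (insert z T) z := by
    obtain ⟨v, hv, hpriv⟩ | ⟨z, hz, hS⟩ := hG.exists_isPrivateApex_or_isNClique_four hT
    · exact ⟨v, hv, .inl hpriv⟩
    · have hpaw := hφ _ hS.card_eq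
      have hzS := mem_insert_self z T
      exact ⟨φ (insert z T) z, mem_of_mem_insert_of_ne (hpaw.mapsTo z hzS) (hpaw.apply_ne hzS),
        .inr ⟨z, hz, hS, rfl⟩⟩
  choose! apex hapex_mem hapex using hchoice
  refine ⟨apex, hapex_mem, fun T hT => (hapex T hT).imp_right fun ⟨z, hz, hS, _⟩ => ⟨z, hz, hS⟩,
    fun S hS => (hφ S hS.card_eq).congr fun z hz => ?_⟩
  have hT : G.IsNClique 3 (S.erase z) := hS.erase_of_mem hz
  obtain hpriv | ⟨z', hz', hS', hz'_eq⟩ := hapex _ hT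
  · have hz_eq : z = apex (S.erase z) := hpriv z fun u hu =>
      hS.isClique (mem_of_mem_erase (mem_of_mem_erase hu)) hz
        (ne_of_mem_erase (mem_of_mem_erase hu))
    exact absurd hz_eq.symm (ne_of_mem_erase (hapex_mem _ hT))
  · obtain ⟨u, hu, v, hv, huv⟩ := one_lt_card.1 (hT.card_eq ▸ (by norm_num : 1 < 3))
    have hz'_adj {x : V} (hx : x ∈ S.erase z) : G.Adj x z' :=
      hS'.isClique (mem_insert_of_mem hx) (mem_insert_self _ _) (ne_of_mem_of_not_mem hx hz')
    have hz'S : z' ∈ S := hG.commonNeighbors_subset_of_isNClique_four hS (mem_of_mem_erase hu)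
      (mem_of_mem_erase hv) huv ⟨hz'_adj hu, hz'_adj hv⟩
    obtain rfl : z' = z := by_contra fun h => hz' (mem_erase.2 ⟨h, hz'S⟩)
    rw [hz'_eq, insert_erase hz]

variable {apex : Finset V → V}

lemma IsApexRule.eq_of_apex_eq (hG : C5Free G) (hapex : IsApexRule G apex) {x y z z' : V}
    (hxy : G.Adj x y) (hz : z ∈ G.commonNeighbors x y) (hz' : z' ∈ G.commonNeighbors x y)
    (hz_apex : apex {x, y, z} = z) (hz'_apex : apex {x, y, z'} = z') : z = z' := by
  by_contra hne
  have hT : G.IsNClique 3 {x, y, z} := SimpleGraph.is3Clique_triple_iff.2 ⟨hxy, hz.1, hz.2⟩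
  obtain hpriv | ⟨d, hd, hS⟩ := hapex.isPrivateApex_or_isNClique_four _ hT
  · rw [hz_apex] at hpriv
    refine hne (hpriv z' fun u hu => ?_).symm
    obtain rfl | rfl : u = x ∨ u = y := by grind
    exacts [hz'.1, hz'.2]
  · have hz'd : z' = d := by
      have : z' ∈ insert d {x, y, z} := mem_coe.1 <|
        hG.commonNeighbors_subset_of_isNClique_four hS (by simp) (by simp) hxy.ne hz'
      grind [hz'.1.ne, hz'.2.ne]
    subst hz'd
    refine (hapex.isPawMap _ hS).apply_apply_ne z' (by simp) ?_
    have hzS : (insert z' {x, y, z} : Finset V).erase z = {x, y, z'} := by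
      grind [hz.1.ne, hz.2.ne]
    simp only [hz'_apex, hz_apex, erase_insert hd, hzS]

/-- The graph formed by the edges chosen by `apex`: those whose opposite vertex in some triangle is
the apex of that triangle. -/
def baseGraph (G : SimpleGraph V) (apex : Finset V → V) : SimpleGraph V where
  Adj x y := G.Adj x y ∧ ∃ z ∈ G.commonNeighbors x y, apex {x, y, z} = z
  symm := ⟨fun x y ⟨hxy, z, hz, hz_apex⟩ =>
    ⟨hxy.symm, z, G.commonNeighbors_symm x y ▸ hz, by rwa [Finset.insert_comm]⟩⟩
  loopless := ⟨fun _ h => h.1.ne rfl⟩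

lemma baseGraph_le : baseGraph G apex ≤ G := fun _ _ h => h.1

lemma C5Free.apex_eq_of_baseGraph_adj (hG : C5Free G) {a b c d : V}
    (hab : (baseGraph G apex).Adj a b) (hbc : G.Adj b c) (hcd : G.Adj c d) (hda : G.Adj d a)
    (hac : a ≠ c) (hbd : b ≠ d) :
    G.Adj a c ∧ apex {a, b, c} = c ∨ G.Adj d b ∧ apex {d, a, b} = d := by
  obtain ⟨hab, z, hz, hz_apex⟩ := hab
  by_cases hzc : z = c
  · subst hzc
    exact .inl ⟨hz.1, hz_apex⟩
  by_cases hzd : z = d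
  · subst hzd
    exact .inr ⟨hz.2.symm, by rwa [Finset.insert_comm, Finset.pair_comm]⟩
  exact (hG.not_pentagon hz.1 hz.2.symm hbc hcd hda hab.ne hac hzc hzd hbd).elim

lemma IsApexRule.c4Free_baseGraph (hG : C5Free G) (hapex : IsApexRule G apex) :
    C4Free (baseGraph G apex) := by
  intro a c hac b hb d hd
  by_contra hbd
  have hab : (baseGraph G apex).Adj a b := hb.1
  have hbc : (baseGraph G apex).Adj b c := hb.2.symm
  have hcd : (baseGraph G apex).Adj c d := hd.2
  have hda : (baseGraph G apex).Adj d a := hd.1.symm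
  have hchord₁ := hG.apex_eq_of_baseGraph_adj hab hbc.1 hcd.1 hda.1 hac hbd
  have hchord₂ := hG.apex_eq_of_baseGraph_adj hbc hcd.1 hda.1 hab.1 hbd hac.symm
  have hchord₃ := hG.apex_eq_of_baseGraph_adj hcd hda.1 hab.1 hbc.1 hac.symm (Ne.symm hbd)
  have hchord₄ := hG.apex_eq_of_baseGraph_adj hda hab.1 hbc.1 hcd.1 (Ne.symm hbd) hac
  -- Two consecutive edges of the square cannot both have their triangle on the same diagonal.
  have hadj_ac : G.Adj a c := by grind [G.adj_comm]
  have hadj_bd : G.Adj b d := by grind [G.adj_comm]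
  have hT : G.IsNClique 3 {a, b, c} := SimpleGraph.is3Clique_triple_iff.2 ⟨hab.1, hadj_ac, hbc.1⟩
  have hS : G.IsNClique 4 {d, a, b, c} :=
    hT.insert (by simp [hda.1, hadj_bd.symm, hcd.1.symm])
  obtain ⟨w, hw, hw_ne⟩ := (hapex.isPawMap _ hS).exists_forall_ne
  have ha_erase : ({d, a, b, c} : Finset V).erase a = {b, c, d} := by grind [hab.ne, hda.ne]
  have hb_erase : ({d, a, b, c} : Finset V).erase b = {c, d, a} := by grind [hab.ne, hbc.ne]
  have hc_erase : ({d, a, b, c} : Finset V).erase c = {d, a, b} := by grind [hbc.ne, hcd.ne]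
  have hd_erase : ({d, a, b, c} : Finset V).erase d = {a, b, c} := by grind [hcd.ne, hda.ne]
  simp only [mem_insert, mem_singleton, forall_eq_or_imp, forall_eq, ha_erase, hb_erase, hc_erase,
    hd_erase] at hw hw_ne
  -- Going once around the square, `z ↦ apex (S \ {z})` permutes the four vertices cyclically.
  grind

lemma IsApexRule.apex_mem_commonNeighbors_of_erase_eq (hapex : IsApexRule G apex) {T : Finset V}
    (hT : G.IsNClique 3 T) {x y : V} (hxy : T.erase (apex T) = {x, y}) :
    apex T ∈ G.commonNeighbors x y ∧ {x, y, apex T} = T := by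
  have hmem := hapex.apex_mem T hT
  have hadj {u : V} (hu : u ∈ T.erase (apex T)) : G.Adj u (apex T) :=
    hT.isClique (mem_of_mem_erase hu) hmem (ne_of_mem_erase hu)
  refine ⟨⟨hadj (by simp [hxy]), hadj (by simp [hxy])⟩, ?_⟩
  conv_rhs => rw [← insert_erase hmem, hxy]
  rw [pair_comm y, Finset.insert_comm]

lemma IsApexRule.ncard_triangles_le [Finite V] (hG : C5Free G) (hapex : IsApexRule G apex) :
    {T | G.IsNClique 3 T}.ncard ≤ (baseGraph G apex).edgeSet.ncard := by
  have : Nonempty (Sym2 V) := ⟨s(apex ∅, apex ∅)⟩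
  have hedge (T : Finset V) (hT : G.IsNClique 3 T) :
      ∃ e ∈ (baseGraph G apex).edgeSet, T.erase (apex T) = e.toFinset := by
    have hmem := hapex.apex_mem T hT
    obtain ⟨x, y, hne, hxy⟩ : ∃ x y, x ≠ y ∧ T.erase (apex T) = {x, y} :=
      card_eq_two.1 (by rw [card_erase_of_mem hmem, hT.card_eq])
    obtain ⟨hcommon, hT_eq⟩ := hapex.apex_mem_commonNeighbors_of_erase_eq hT hxy
    have hx : x ∈ T.erase (apex T) := by simp [hxy]
    have hy : y ∈ T.erase (apex T) := by simp [hxy]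
    exact ⟨s(x, y), ⟨hT.isClique (mem_of_mem_erase hx) (mem_of_mem_erase hy) hne,
      apex T, hcommon, by rw [hT_eq]⟩, by rw [hxy, Sym2.toFinset_mk_eq]⟩
  choose! e he he_eq using hedge
  refine Set.ncard_le_ncard_of_injOn e he fun T hT T' hT' hee' => ?_
  obtain ⟨x, y, hxy⟩ : ∃ x y, e T = s(x, y) := Sym2.exists.1 ⟨e T, rfl⟩
  have hbase : (baseGraph G apex).Adj x y := by simpa [hxy] using he T hT
  obtain ⟨hcommon, hT_eq⟩ := hapex.apex_mem_commonNeighbors_of_erase_eq hT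
    (he_eq T hT |>.trans (by rw [hxy, Sym2.toFinset_mk_eq]))
  obtain ⟨hcommon', hT'_eq⟩ := hapex.apex_mem_commonNeighbors_of_erase_eq hT'
    (he_eq T' hT' |>.trans (by rw [← hee', hxy, Sym2.toFinset_mk_eq]))
  rw [← hT_eq, ← hT'_eq, hapex.eq_of_apex_eq hG hbase.1 hcommon hcommon' (by rw [hT_eq])
    (by rw [hT'_eq])]

end EdgeSelection

lemma C5Free.exists_c4Free_ncard_triangles_le {V : Type*} [Finite V] {G : SimpleGraph V}
    (hG : C5Free G) :
    ∃ H ≤ G, C4Free H ∧ {T | G.IsNClique 3 T}.ncard ≤ H.edgeSet.ncard := by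
  classical
  rcases isEmpty_or_nonempty V with _ | _
  · exact ⟨G, le_rfl, fun a => isEmptyElim a, by
      simp [SimpleGraph.isNClique_iff, Finset.eq_empty_of_isEmpty]⟩
  · obtain ⟨apex, hapex⟩ := hG.exists_isApexRule
    exact ⟨baseGraph G apex, baseGraph_le, hapex.c4Free_baseGraph hG, hapex.ncard_triangles_le hG⟩

lemma three_mul_sq_le {a b D : ℝ} (ha : 0 < a) (hb : 0 < b) (hD : 0 ≤ D) :
    3 * D ^ 2 ≤ a * b + D ^ 3 * a⁻¹ + D ^ 3 * b⁻¹ := by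
  -- AM-GM for `a * b`, `D³ / a`, `D³ / b`, whose product `D⁶` does not depend on `a` and `b`.
  have amgm {x y z : ℝ} (hx : 0 ≤ x) (hy : 0 ≤ y) (hz : 0 ≤ z) :
      27 * (x * y * z) ≤ (x + y + z) ^ 3 := by
    nlinarith [mul_nonneg hx (sq_nonneg (y - z)), mul_nonneg hy (sq_nonneg (x - z)),
      mul_nonneg hz (sq_nonneg (x - y)), mul_nonneg (add_nonneg (add_nonneg hx hy) hz)
      (add_nonneg (add_nonneg (sq_nonneg (x - y)) (sq_nonneg (y - z))) (sq_nonneg (x - z)))]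
  refine le_of_pow_le_pow_left₀ three_ne_zero (by positivity) ?_
  calc (3 * D ^ 2) ^ 3 = 27 * (a * b * (D ^ 3 * a⁻¹) * (D ^ 3 * b⁻¹)) := by
        field_simp; ring
    _ ≤ _ := amgm (by positivity) (by positivity) (by positivity)

section DegreeSums

variable {V : Type*} [Fintype V] (G : SimpleGraph V) [DecidableRel G.Adj]

lemma sum_sum_neighborFinset_comm {M : Type*} [AddCommMonoid M] (f : V → V → M) :
    ∑ x, ∑ y ∈ G.neighborFinset x, f x y = ∑ x, ∑ y ∈ G.neighborFinset x, f y x :=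
  sum_comm' (by simp [G.adj_comm])

lemma sum_sum_degree_eq_sum_degree_sq :
    ∑ x, ∑ z ∈ G.neighborFinset x, G.degree z = ∑ x, G.degree x ^ 2 := by
  simp [← sum_sum_neighborFinset_comm G fun x _ => G.degree x, sq]

lemma sum_sum_inv_degree_le :
    ∑ x, ∑ _y ∈ G.neighborFinset x, (G.degree x : ℝ)⁻¹ ≤ Fintype.card V := calc
  _ = ∑ x, (G.degree x : ℝ) * (G.degree x : ℝ)⁻¹ := by simp
  _ ≤ ∑ _x : V, (1 : ℝ) := sum_le_sum fun x _ => mul_inv_le_one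
  _ = Fintype.card V := by simp

lemma sum_degree_cubed_le :
    (∑ x, G.degree x) ^ 3 ≤
      Fintype.card V ^ 2 * ∑ x, ∑ y ∈ G.neighborFinset x, G.degree x * G.degree y := by
  rcases isEmpty_or_nonempty V with _ | _
  · simp
  let n : ℝ := Fintype.card V
  let M : ℝ := ∑ x, (G.degree x : ℝ)
  let W : ℝ := ∑ x, ∑ y ∈ G.neighborFinset x, (G.degree x : ℝ) * G.degree y
  have hn : 0 < n := Nat.cast_pos.2 Fintype.card_pos
  have hMn : 0 ≤ M / n := div_nonneg (sum_nonneg fun x _ => Nat.cast_nonneg _) hn.le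
  have sum_sq_eq : ∑ x, ∑ _y ∈ G.neighborFinset x, (M / n) ^ 2 = M * (M / n) ^ 2 := by
    simp [M, sum_mul]
  -- `M / n` is the average degree, so this is an equality for regular graphs.
  have hsum : ∑ x, ∑ y ∈ G.neighborFinset x, 3 * (M / n) ^ 2 ≤
      ∑ x, ∑ y ∈ G.neighborFinset x, ((G.degree x : ℝ) * G.degree y +
        (M / n) ^ 3 * (G.degree x : ℝ)⁻¹ + (M / n) ^ 3 * (G.degree y : ℝ)⁻¹) := by
    refine sum_le_sum fun x _ => sum_le_sum fun y hy => ?_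
    have hxy : G.Adj x y := (G.mem_neighborFinset x y).1 hy
    exact three_mul_sq_le (mod_cast (G.degree_pos_iff_exists_adj _).2 ⟨y, hxy⟩)
      (mod_cast (G.degree_pos_iff_exists_adj _).2 ⟨x, hxy.symm⟩) hMn
  simp_rw [sum_add_distrib, ← mul_sum (a := (3 : ℝ)), ← mul_sum (a := (M / n) ^ 3)] at hsum
  rw [sum_sq_eq, ← sum_sum_neighborFinset_comm G fun x _ => (G.degree x : ℝ)⁻¹] at hsum
  have hMW : M ^ 3 ≤ n ^ 2 * W := calc
    M ^ 3 = n ^ 2 * (3 * (M * (M / n) ^ 2) - 2 * ((M / n) ^ 3 * n)) := by field_simp; ring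
    _ ≤ n ^ 2 * W := by
      have := mul_le_mul_of_nonneg_left (sum_sum_inv_degree_le G) (pow_nonneg hMn 3)
      gcongr
      linarith
  simp only [n, M, W] at hMW
  exact_mod_cast hMW

end DegreeSums

section SecondNeighbors

variable {V : Type*} [Fintype V] [DecidableEq V] {G : SimpleGraph V} [DecidableRel G.Adj]

variable (G) in
/-- The endpoints of the walks of length two starting at `x`; these include `x` itself as soon as
`x` has a neighbour. -/
def secondNeighborFinset (x : V) : Finset V :=
  (G.neighborFinset x).biUnion fun z => G.neighborFinset z

lemma C4Free.sum_degree_neighborFinset_le (h4 : C4Free G) (x : V) :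
    ∑ z ∈ G.neighborFinset x, G.degree z ≤ #(secondNeighborFinset G x) + G.degree x := by
  have hdisj : (G.neighborFinset x : Set V).PairwiseDisjoint
      fun z => (G.neighborFinset z).erase x := by
    refine fun z hz w hw hzw => disjoint_left.2 fun u huz huw => hzw ?_
    simp only [mem_coe, mem_erase, SimpleGraph.mem_neighborFinset] at hz hw huz huw
    exact h4 huz.1.symm ⟨hz, huz.2.symm⟩ ⟨hw, huw.2.symm⟩
  calc ∑ z ∈ G.neighborFinset x, G.degree z
      = ∑ z ∈ G.neighborFinset x, (#((G.neighborFinset z).erase x) + 1) :=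
        sum_congr rfl fun z hz => by
          rw [card_erase_add_one (by simpa [G.adj_comm] using hz), G.card_neighborFinset_eq_degree]
    _ = #((G.neighborFinset x).biUnion fun z => (G.neighborFinset z).erase x) + G.degree x := by
        rw [sum_add_distrib, card_biUnion hdisj]; simp
    _ ≤ #(secondNeighborFinset G x) + G.degree x := by
        gcongr
        exact biUnion_mono fun z _ => erase_subset _ _

lemma C5Free.secondNeighborFinset_inter_subset (h5 : C5Free G) {x y : V} (hxy : G.Adj x y) :
    secondNeighborFinset G x ∩ secondNeighborFinset G y ⊆
      G.neighborFinset x ∪ G.neighborFinset y ∪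
        (G.neighborFinset x ∩ G.neighborFinset y).biUnion fun z => G.neighborFinset z := by
  intro u hu
  simp only [secondNeighborFinset, mem_inter, mem_biUnion, mem_union,
    SimpleGraph.mem_neighborFinset] at hu ⊢
  obtain ⟨⟨z, hxz, hzu⟩, w, hyw, hwu⟩ := hu
  by_contra! h
  obtain ⟨⟨hxu, hyu⟩, hcommon⟩ := h
  refine h5.not_pentagon hxz hzu hwu.symm hyw.symm hxy.symm ?_ ?_ ?_ ?_ ?_
  · rintro rfl; exact hyu hxy.symm
  · rintro rfl; exact hxu hwu
  · rintro rfl; exact hcommon z ⟨hxz, hyw⟩ hzu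
  · rintro rfl; exact hyu hzu
  · rintro rfl; exact hxu hxy

lemma sum_degree_neighborFinset_add_le (h4 : C4Free G) (h5 : C5Free G) {x y : V}
    (hxy : G.Adj x y) :
    ∑ z ∈ G.neighborFinset x, G.degree z + ∑ z ∈ G.neighborFinset y, G.degree z ≤
      Fintype.card V + 2 * G.degree x + 2 * G.degree y +
        ∑ c ∈ G.neighborFinset x ∩ G.neighborFinset y, G.degree c := by
  have hinter : #(secondNeighborFinset G x ∩ secondNeighborFinset G y) ≤
      G.degree x + G.degree y + ∑ c ∈ G.neighborFinset x ∩ G.neighborFinset y, G.degree c := calc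
    _ ≤ _ := card_le_card (h5.secondNeighborFinset_inter_subset hxy)
    _ ≤ #(G.neighborFinset x) + #(G.neighborFinset y) +
          ∑ c ∈ G.neighborFinset x ∩ G.neighborFinset y, #(G.neighborFinset c) :=
        (card_union_le _ _).trans (add_le_add (card_union_le _ _) card_biUnion_le)
    _ = _ := by simp only [SimpleGraph.card_neighborFinset_eq_degree]
  have hunion : #(secondNeighborFinset G x ∪ secondNeighborFinset G y) ≤ Fintype.card V :=
    card_le_univ _
  have := card_union_add_card_inter (secondNeighborFinset G x) (secondNeighborFinset G y)
  have := h4.sum_degree_neighborFinset_le x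
  have := h4.sum_degree_neighborFinset_le y
  linarith

lemma C4Free.sum_degree_common_neighbor_le (h4 : C4Free G) :
    ∑ x, ∑ y ∈ G.neighborFinset x, ∑ c ∈ G.neighborFinset x ∩ G.neighborFinset y, G.degree c ≤
      ∑ x, G.degree x ^ 2 := by
  have card_common_le_one {x c : V} (hxc : G.Adj x c) :
      #(G.neighborFinset x ∩ G.neighborFinset c) ≤ 1 :=
    card_le_one.2 fun y hy z hz => h4 hxc.ne (by simpa [G.mem_commonNeighbors] using hy)
      (by simpa [G.mem_commonNeighbors] using hz)
  calc ∑ x, ∑ y ∈ G.neighborFinset x, ∑ c ∈ G.neighborFinset x ∩ G.neighborFinset y, G.degree c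
      = ∑ x, ∑ c ∈ G.neighborFinset x,
          ∑ _y ∈ G.neighborFinset x ∩ G.neighborFinset c, G.degree c :=
        sum_congr rfl fun x _ => sum_comm' fun y c => by
          simp only [mem_inter, SimpleGraph.mem_neighborFinset, G.adj_comm y c]; tauto
    _ ≤ ∑ x, ∑ c ∈ G.neighborFinset x, G.degree c := by
        refine sum_le_sum fun x _ => sum_le_sum fun c hc => ?_
        rw [sum_const, smul_eq_mul]
        exact mul_le_of_le_one_left' (card_common_le_one (by simpa using hc))
    _ = ∑ x, G.degree x ^ 2 := sum_sum_degree_eq_sum_degree_sq G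

end SecondNeighbors

section EdgeBound

variable {V : Type*} [Fintype V] {G : SimpleGraph V} [DecidableRel G.Adj]

lemma C4Free.sum_degree_sq_le (h4 : C4Free G) :
    ∑ x, G.degree x ^ 2 ≤ Fintype.card V ^ 2 + ∑ x, G.degree x := by
  classical
  calc ∑ x, G.degree x ^ 2 = ∑ x, ∑ z ∈ G.neighborFinset x, G.degree z :=
        (sum_sum_degree_eq_sum_degree_sq G).symm
    _ ≤ ∑ x, (Fintype.card V + G.degree x) := by
        gcongr with x
        exact (h4.sum_degree_neighborFinset_le x).trans (by gcongr; exact card_le_univ _)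
    _ = Fintype.card V ^ 2 + ∑ x, G.degree x := by simp [sum_add_distrib, sq]

lemma two_mul_sum_degree_mul_degree_le (h4 : C4Free G) (h5 : C5Free G) :
    2 * ∑ x, ∑ y ∈ G.neighborFinset x, G.degree x * G.degree y ≤
      Fintype.card V * ∑ x, G.degree x + 5 * ∑ x, G.degree x ^ 2 := by
  classical
  have hleft : ∑ x, ∑ _y ∈ G.neighborFinset x, ∑ z ∈ G.neighborFinset x, G.degree z =
      ∑ x, ∑ y ∈ G.neighborFinset x, G.degree x * G.degree y := by
    simp [mul_sum]
  have hsq : ∑ x, ∑ _y ∈ G.neighborFinset x, G.degree x = ∑ x, G.degree x ^ 2 := by simp [sq]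
  have h := sum_le_sum fun x (_ : x ∈ univ) => sum_le_sum fun y (hy : y ∈ G.neighborFinset x) =>
    sum_degree_neighborFinset_add_le h4 h5 ((G.mem_neighborFinset x y).1 hy)
  simp only [sum_add_distrib, ← mul_sum] at h
  rw [← sum_sum_neighborFinset_comm G fun x _ => ∑ z ∈ G.neighborFinset x, G.degree z,
    ← sum_sum_neighborFinset_comm G fun x _ => G.degree x, hleft, hsq] at h
  have hn : ∑ x, ∑ _y ∈ G.neighborFinset x, Fintype.card V = Fintype.card V * ∑ x, G.degree x := by
    simp [mul_sum, mul_comm]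
  linarith [h4.sum_degree_common_neighbor_le]

lemma card_edgeFinset_cubic_le (h4 : C4Free G) (h5 : C5Free G) :
    16 * #G.edgeFinset ^ 3 ≤ 2 * Fintype.card V ^ 3 * #G.edgeFinset + 5 * Fintype.card V ^ 4 +
      10 * Fintype.card V ^ 2 * #G.edgeFinset := by
  have hupper := (two_mul_sum_degree_mul_degree_le h4 h5).trans
    (add_le_add_right (Nat.mul_le_mul_left 5 h4.sum_degree_sq_le) _)
  have hlower := sum_degree_cubed_le G
  rw [G.sum_degrees_eq_twice_card_edges] at hupper hlower
  have := Nat.mul_le_mul_left (Fintype.card V ^ 2) hupper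
  linarith

end EdgeBound

lemma rpow_three_halves {x : ℝ} (hx : 0 ≤ x) : x ^ (3 / 2 : ℝ) = √x ^ 3 := by
  rw [Real.rpow_div_two_eq_sqrt 3 hx, Real.rpow_ofNat]

lemma le_of_cubic_le {n t : ℕ} (h : 16 * t ^ 3 ≤ 2 * n ^ 3 * t + 5 * n ^ 4 + 10 * n ^ 2 * t) :
    (t : ℝ) ≤ 1 / (2 * √2) * (n : ℝ) ^ (3 / 2 : ℝ) + 2 * n := by
  rw [rpow_three_halves n.cast_nonneg]
  obtain ⟨s, hs, hsn⟩ : ∃ s : ℝ, 0 ≤ s ∧ s ^ 2 = n :=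
    ⟨√n, by positivity, Real.sq_sqrt n.cast_nonneg⟩
  have h' : 16 * (t : ℝ) ^ 3 ≤ 2 * (s ^ 2) ^ 3 * t + 5 * (s ^ 2) ^ 4 + 10 * (s ^ 2) ^ 2 * t := by
    rw [hsn]; exact_mod_cast h
  rw [← hsn, Real.sqrt_sq hs]
  obtain ⟨a, ha⟩ : ∃ a, a = 1 / (2 * √2) := ⟨_, rfl⟩
  have ha_pos : 0 < a := by rw [ha]; positivity
  have ha_sq : a ^ 2 = 1 / 8 := by rw [ha, div_pow, mul_pow, Real.sq_sqrt] <;> norm_num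
  have ha_gt : 1 / 3 < a := lt_of_pow_lt_pow_left₀ 2 ha_pos.le (by rw [ha_sq]; norm_num)
  rw [← ha]
  by_contra! hlt
  have ht : 0 < (t : ℝ) := lt_of_le_of_lt (by positivity) hlt
  have hs_le : s ^ 3 ≤ 3 * t := by
    linarith [mul_le_mul_of_nonneg_right ha_gt.le (pow_nonneg hs 3), sq_nonneg s]
  have hupper : 16 * (t : ℝ) ^ 2 ≤ 2 * s ^ 6 + 15 * s ^ 5 + 10 * s ^ 4 := by
    refine le_of_mul_le_mul_right ?_ ht
    linarith [mul_le_mul_of_nonneg_left hs_le (by positivity : 0 ≤ 5 * s ^ 5)]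
  have hlower : s ^ 6 / 8 + 4 / 3 * s ^ 5 + 4 * s ^ 4 < (t : ℝ) ^ 2 := calc
    s ^ 6 / 8 + 4 / 3 * s ^ 5 + 4 * s ^ 4 = a ^ 2 * s ^ 6 + 4 * (1 / 3) * s ^ 5 + 4 * s ^ 4 := by
      rw [ha_sq]; ring
    _ ≤ a ^ 2 * s ^ 6 + 4 * a * s ^ 5 + 4 * s ^ 4 := by gcongr
    _ = (a * s ^ 3 + 2 * s ^ 2) ^ 2 := by ring
    _ < (t : ℝ) ^ 2 := by gcongr
  linarith [pow_nonneg hs 4, pow_nonneg hs 5]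

lemma eventually_mul_le_mul_rpow (c : ℝ) {ε : ℝ} (hε : 0 < ε) :
    ∀ᶠ n : ℕ in Filter.atTop, c * n ≤ ε * (n : ℝ) ^ (3 / 2 : ℝ) := by
  have hsqrt : Filter.Tendsto (fun n : ℕ => √(n : ℝ)) Filter.atTop Filter.atTop :=
    Real.tendsto_sqrt_atTop.comp tendsto_natCast_atTop_atTop
  filter_upwards [hsqrt.eventually_ge_atTop (c / ε)] with n hn
  have hnonneg : (0 : ℝ) ≤ n := n.cast_nonneg
  calc c * n ≤ ε * √n * n := by gcongr; exact (div_le_iff₀' hε).1 hn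
    _ = ε * (n : ℝ) ^ (3 / 2 : ℝ) := by
      rw [rpow_three_halves hnonneg, pow_succ', Real.sq_sqrt hnonneg, mul_assoc]

theorem triangles_in_C5_free_general {V : Type*} [Fintype V] {G : SimpleGraph V}
    (hG : C5Free G) :
    ({t : Finset V | G.IsNClique 3 t}.ncard : ℝ) ≤
      1 / (2 * √2) * (Fintype.card V : ℝ) ^ (3 / 2 : ℝ) + 2 * Fintype.card V := by
  classical
  obtain ⟨H, hHG, h4, hcard⟩ := hG.exists_c4Free_ncard_triangles_le
  rw [← SimpleGraph.coe_edgeFinset, Set.ncard_coe_finset] at hcard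
  calc ({t : Finset V | G.IsNClique 3 t}.ncard : ℝ)
      ≤ #H.edgeFinset := mod_cast hcard
    _ ≤ _ := le_of_cubic_le (card_edgeFinset_cubic_le h4 (hG.mono hHG))

theorem triangles_in_C5_free :
    ∀ ε : ℝ, 0 < ε → ∃ N : ℕ, ∀ n : ℕ, N ≤ n →
      ∀ G : SimpleGraph (Fin n), C5Free G →
        ({t : Finset (Fin n) | G.IsNClique 3 t}.ncard : ℝ) ≤
          (1 / (2 * Real.sqrt 2) + ε) * (n : ℝ) ^ ((3 : ℝ) / 2) := by
  intro ε hε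
  obtain ⟨N, hN⟩ := Filter.eventually_atTop.1 (eventually_mul_le_mul_rpow 2 hε)
  refine ⟨N, fun n hn G hG => ?_⟩
  have hgeneral := triangles_in_C5_free_general hG
  rw [Fintype.card_fin] at hgeneral
  linarith [hN n hn]
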